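/- There exists a constant c > 0 such that for every t > 0 and every x ∈ [0,1], ∫₀¹ G_t(x,y)^{11/5} dy ≤ c · t^{−3/5}. -/

import Mathlib

/-!
The bound follows by interpolating between `L^∞` and `L²`. Put `M = t^{−1/2}`. Comparison with a
Gaussian integral gives `∑ 2 e^{−π²n²t} ≤ M` (`sum_kernelCoeff_le`), hence `|G| ≤ M`
(`abs_kernel_le`). Orthogonality of the sines on `[0,1]` (`integral_sin_mul_sin`) and dominated
convergence of the partial sums give `∫₀¹ G² ≤ M` as well (`integral_kernel_sq_le`). Hence
`∫₀¹ |G|^{11/5} ≤ M^{1/5} ∫₀¹ G² ≤ M^{6/5} = t^{−3/5}`, so `c = 1` works.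
No positivity of `G` is needed, since `g ^ p ≤ |g| ^ p` holds for the real power with its
convention at negative bases.
-/

open Real MeasureTheory Set

/-- The Dirichlet heat kernel on `[0,1]`:
`G t x y = ∑_{n=1}^∞ 2 e^{−π²n²t} sin(nπx) sin(nπy)` for `t > 0`, and `0` for `t ≤ 0`. -/
noncomputable def G (t x y : ℝ) : ℝ :=
  if 0 < t then
    ∑' n : ℕ, 2 * Real.exp (-(Real.pi ^ 2) * ((n : ℝ) + 1) ^ 2 * t)
      * Real.sin (((n : ℝ) + 1) * Real.pi * x) * Real.sin (((n : ℝ) + 1) * Real.pi * y)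
  else 0

/-- The coefficient `2 e^{−π²(n+1)²t}`, which dominates the `n`-th term of the series for `G`. -/
noncomputable def kernelCoeff (t : ℝ) (n : ℕ) : ℝ :=
  2 * Real.exp (-(Real.pi ^ 2) * ((n : ℝ) + 1) ^ 2 * t)

lemma kernelCoeff_nonneg (t : ℝ) (n : ℕ) : 0 ≤ kernelCoeff t n := by
  unfold kernelCoeff; positivity

lemma kernelCoeff_le_two {t : ℝ} (ht : 0 < t) (n : ℕ) : kernelCoeff t n ≤ 2 := by
  have h : Real.exp (-(Real.pi ^ 2) * ((n : ℝ) + 1) ^ 2 * t) ≤ 1 := by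
    rw [Real.exp_le_one_iff]
    have : 0 ≤ (Real.pi ^ 2) * ((n : ℝ) + 1) ^ 2 * t := by positivity
    linarith
  unfold kernelCoeff; linarith

/-- Integral comparison: the partial sums are at most `2 ∫₀^∞ e^{−π²ts²} ds = (πt)^{−1/2}`. -/
lemma sum_kernelCoeff_le {t : ℝ} (ht : 0 < t) (N : ℕ) :
    ∑ n ∈ Finset.range N, kernelCoeff t n ≤ t ^ (-(1 : ℝ) / 2) := by
  have hb : 0 < π ^ 2 * t := by positivity
  have hanti : AntitoneOn (fun s : ℝ => Real.exp (-(π ^ 2 * t) * s ^ 2))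
      (Icc (0 : ℝ) (0 + (N : ℕ))) := by
    intro a ha b hb' hab
    apply Real.exp_le_exp.mpr
    have : a ^ 2 ≤ b ^ 2 := pow_le_pow_left₀ ha.1 hab 2
    nlinarith
  have h1 := hanti.sum_le_integral
  have h2 : ∫ s in (0 : ℝ)..(0 + (N : ℕ)), Real.exp (-(π ^ 2 * t) * s ^ 2)
      ≤ ∫ s in Ioi (0 : ℝ), Real.exp (-(π ^ 2 * t) * s ^ 2) := by
    rw [intervalIntegral.integral_of_le (by positivity)]
    exact setIntegral_mono_set (integrable_exp_neg_mul_sq hb).integrableOn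
      (ae_of_all _ fun s => (Real.exp_pos _).le) Ioc_subset_Ioi_self.eventuallyLE
  rw [integral_gaussian_Ioi] at h2
  have h3 : √(π / (π ^ 2 * t)) ≤ t ^ (-(1 : ℝ) / 2) := by
    rw [neg_div, Real.rpow_neg ht.le, ← Real.sqrt_eq_rpow, ← Real.sqrt_inv]
    apply Real.sqrt_le_sqrt
    rw [div_le_iff₀ hb]
    have : t⁻¹ * (π ^ 2 * t) = π ^ 2 := by field_simp
    rw [this]
    nlinarith [Real.pi_gt_three]
  have h4 : ∑ n ∈ Finset.range N, kernelCoeff t n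
      = 2 * ∑ i ∈ Finset.range N, Real.exp (-(π ^ 2 * t) * (0 + ((i + 1 : ℕ) : ℝ)) ^ 2) := by
    rw [Finset.mul_sum]
    refine Finset.sum_congr rfl fun n _ => ?_
    unfold kernelCoeff
    push_cast
    ring_nf
  rw [h4]
  linarith

lemma integral_cos_int_mul_pi {k : ℤ} (hk : k ≠ 0) :
    ∫ y in (0 : ℝ)..1, Real.cos ((k : ℝ) * π * y) = 0 := by
  have hk' : (k : ℝ) * π ≠ 0 := mul_ne_zero (by exact_mod_cast hk) Real.pi_ne_zero
  rw [intervalIntegral.integral_comp_mul_left _ hk']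
  simp [Real.sin_int_mul_pi]

lemma integral_sin_mul_sin (m n : ℕ) :
    ∫ y in (0 : ℝ)..1, Real.sin (((m : ℝ) + 1) * π * y) * Real.sin (((n : ℝ) + 1) * π * y)
      = if m = n then 1 / 2 else 0 := by
  have h1 : ∀ y : ℝ, Real.sin (((m : ℝ) + 1) * π * y) * Real.sin (((n : ℝ) + 1) * π * y)
      = (1 / 2) * (Real.cos ((((m : ℤ) - n : ℤ) : ℝ) * π * y)
        - Real.cos ((((m : ℤ) + n + 2 : ℤ) : ℝ) * π * y)) := by
    intro y
    have e1 : (((m : ℤ) - n : ℤ) : ℝ) * π * y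
        = ((m : ℝ) + 1) * π * y - ((n : ℝ) + 1) * π * y := by push_cast; ring
    have e2 : (((m : ℤ) + n + 2 : ℤ) : ℝ) * π * y
        = ((m : ℝ) + 1) * π * y + ((n : ℝ) + 1) * π * y := by push_cast; ring
    rw [e1, e2, Real.cos_sub, Real.cos_add]
    ring
  simp_rw [h1]
  rw [intervalIntegral.integral_const_mul, intervalIntegral.integral_sub
    (Continuous.intervalIntegrable (by fun_prop) _ _)
    (Continuous.intervalIntegrable (by fun_prop) _ _),
    integral_cos_int_mul_pi (k := (m : ℤ) + n + 2) (by omega)]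
  split_ifs with h
  · subst h; simp
  · rw [integral_cos_int_mul_pi (by omega)]; simp

lemma integral_sq_sum_sin (a : ℕ → ℝ) (N : ℕ) :
    ∫ y in (0 : ℝ)..1, (∑ n ∈ Finset.range N, a n * Real.sin (((n : ℝ) + 1) * π * y)) ^ 2
      = ∑ n ∈ Finset.range N, a n ^ 2 / 2 := by
  simp_rw [sq, Finset.sum_mul_sum]
  rw [intervalIntegral.integral_finsetSum
    fun i _ => Continuous.intervalIntegrable (by fun_prop) _ _]
  refine Finset.sum_congr rfl fun i hi => ?_
  rw [intervalIntegral.integral_finsetSum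
    fun i _ => Continuous.intervalIntegrable (by fun_prop) _ _]
  have h : ∀ j : ℕ, ∫ y in (0 : ℝ)..1, a i * Real.sin (((i : ℝ) + 1) * π * y)
      * (a j * Real.sin (((j : ℝ) + 1) * π * y)) = if i = j then a i * a j / 2 else 0 := by
    intro j
    have e : ∀ y : ℝ, a i * Real.sin (((i : ℝ) + 1) * π * y)
        * (a j * Real.sin (((j : ℝ) + 1) * π * y)) = (a i * a j)
        * (Real.sin (((i : ℝ) + 1) * π * y) * Real.sin (((j : ℝ) + 1) * π * y)) := by
      intro y; ring
    simp_rw [e]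
    rw [intervalIntegral.integral_const_mul, integral_sin_mul_sin]
    split_ifs <;> ring
  simp_rw [h]
  rw [Finset.sum_ite_eq, if_pos hi]

/-- Partial sums of the series defining `G t x y`. -/
noncomputable def kernelPartial (t x : ℝ) (N : ℕ) (y : ℝ) : ℝ :=
  ∑ n ∈ Finset.range N, (kernelCoeff t n * Real.sin (((n : ℝ) + 1) * π * x))
    * Real.sin (((n : ℝ) + 1) * π * y)

lemma continuous_kernelPartial (t x : ℝ) (N : ℕ) : Continuous (kernelPartial t x N) := by
  unfold kernelPartial; fun_prop

lemma abs_kernelCoeff_mul_sin_le (t x : ℝ) (n : ℕ) :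
    |kernelCoeff t n * Real.sin (((n : ℝ) + 1) * π * x)| ≤ kernelCoeff t n := by
  rw [abs_mul, abs_of_nonneg (kernelCoeff_nonneg t n)]
  exact mul_le_of_le_one_right (kernelCoeff_nonneg t n) (Real.abs_sin_le_one _)

lemma abs_kernel_term_le (t x y : ℝ) (n : ℕ) :
    |kernelCoeff t n * Real.sin (((n : ℝ) + 1) * π * x) * Real.sin (((n : ℝ) + 1) * π * y)|
      ≤ kernelCoeff t n := by
  rw [abs_mul]
  exact (mul_le_of_le_one_right (abs_nonneg _) (Real.abs_sin_le_one _)).trans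
    (abs_kernelCoeff_mul_sin_le t x n)

lemma abs_kernelPartial_le {t : ℝ} (ht : 0 < t) (x : ℝ) (N : ℕ) (y : ℝ) :
    |kernelPartial t x N y| ≤ t ^ (-(1 : ℝ) / 2) :=
  (Finset.abs_sum_le_sum_abs _ _).trans <|
    (Finset.sum_le_sum fun n _ => abs_kernel_term_le t x y n).trans (sum_kernelCoeff_le ht N)

lemma tendsto_kernelPartial {t : ℝ} (ht : 0 < t) (x y : ℝ) :
    Filter.Tendsto (fun N => kernelPartial t x N y) Filter.atTop (nhds (G t x y)) := by
  have hs : Summable (kernelCoeff t) :=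
    summable_of_sum_range_le (kernelCoeff_nonneg t) (sum_kernelCoeff_le ht)
  have h : Summable fun n : ℕ => kernelCoeff t n * Real.sin (((n : ℝ) + 1) * π * x)
      * Real.sin (((n : ℝ) + 1) * π * y) :=
    Summable.of_norm_bounded hs fun n => abs_kernel_term_le t x y n
  have := h.hasSum.tendsto_sum_nat
  rw [G, if_pos ht]
  exact this

lemma abs_kernel_le {t : ℝ} (ht : 0 < t) (x y : ℝ) : |G t x y| ≤ t ^ (-(1 : ℝ) / 2) :=
  le_of_tendsto (tendsto_kernelPartial ht x y).abs
    (Filter.Eventually.of_forall fun N => abs_kernelPartial_le ht x N y)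

lemma measurable_kernel {t : ℝ} (ht : 0 < t) (x : ℝ) : Measurable (G t x) :=
  measurable_of_tendsto_metrizable (fun N => (continuous_kernelPartial t x N).measurable)
    (tendsto_pi_nhds.mpr fun y => tendsto_kernelPartial ht x y)

/-- Each coefficient `a` of a partial sum satisfies `|a| ≤ b ≤ 2` with `b = kernelCoeff t n`, so
`a² / 2 ≤ b`: the squared `L²` norm is controlled by the same sum as the sup norm. -/
lemma integral_kernelPartial_sq_le {t : ℝ} (ht : 0 < t) (x : ℝ) (N : ℕ) :
    ∫ y in (0 : ℝ)..1, kernelPartial t x N y ^ 2 ≤ t ^ (-(1 : ℝ) / 2) := by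
  unfold kernelPartial
  rw [integral_sq_sum_sin (fun n => kernelCoeff t n * Real.sin (((n : ℝ) + 1) * π * x))]
  refine (Finset.sum_le_sum fun n _ => ?_).trans (sum_kernelCoeff_le ht N)
  have h1 := abs_kernelCoeff_mul_sin_le t x n
  have h2 := kernelCoeff_le_two ht n
  have h3 := kernelCoeff_nonneg t n
  have h4 := sq_le_sq' (abs_le.mp h1).1 (abs_le.mp h1).2
  nlinarith

lemma integral_kernel_sq_le {t : ℝ} (ht : 0 < t) (x : ℝ) :
    ∫ y in Icc (0 : ℝ) 1, G t x y ^ 2 ≤ t ^ (-(1 : ℝ) / 2) := by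
  rw [integral_Icc_eq_integral_Ioc, ← intervalIntegral.integral_of_le zero_le_one]
  refine le_of_tendsto (intervalIntegral.tendsto_integral_filter_of_dominated_convergence
    (F := fun N y => kernelPartial t x N y ^ 2) (l := Filter.atTop)
    (fun _ => (t ^ (-(1 : ℝ) / 2)) ^ 2) ?_ ?_ ?_ ?_)
    (Filter.Eventually.of_forall (integral_kernelPartial_sq_le ht x))
  · exact Filter.Eventually.of_forall fun N =>
      ((continuous_kernelPartial t x N).pow 2).aestronglyMeasurable
  · refine Filter.Eventually.of_forall fun N => ae_of_all _ fun y _ => ?_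
    rw [norm_pow, Real.norm_eq_abs]
    exact pow_le_pow_left₀ (abs_nonneg _) (abs_kernelPartial_le ht x N y) 2
  · exact intervalIntegrable_const
  · exact ae_of_all _ fun y _ => (tendsto_kernelPartial ht x y).pow 2

/-- There is `c > 0` such that for every `t > 0` and `x ∈ [0,1]`,
`∫₀¹ G_t(x,y)^{11/5} dy ≤ c t^{−3/5}`. -/
theorem kernel_elevenfifths_bound :
    ∃ c : ℝ, 0 < c ∧ ∀ t x : ℝ, 0 < t → x ∈ Set.Icc (0 : ℝ) 1 →
      (∫ y in Set.Icc (0 : ℝ) 1, G t x y ^ ((11 : ℝ) / 5)) ≤ c * t ^ (-(3 : ℝ) / 5) := by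
  refine ⟨1, one_pos, fun t x ht _ => ?_⟩
  set M : ℝ := t ^ (-(1 : ℝ) / 2) with hM
  have hM0 : 0 < M := Real.rpow_pos_of_pos ht _
  have hpt : ∀ y, |G t x y ^ ((11 : ℝ) / 5)| ≤ M ^ ((1 : ℝ) / 5) * G t x y ^ 2 := by
    intro y
    have e : |G t x y| ^ ((11 : ℝ) / 5) = |G t x y| ^ ((1 : ℝ) / 5) * G t x y ^ 2 := by
      rw [← sq_abs (G t x y), ← Real.rpow_natCast,
        ← Real.rpow_add_of_nonneg (abs_nonneg _) (by norm_num) (by norm_num)]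
      norm_num
    calc |G t x y ^ ((11 : ℝ) / 5)| ≤ |G t x y| ^ ((11 : ℝ) / 5) := Real.abs_rpow_le_abs_rpow _ _
      _ = |G t x y| ^ ((1 : ℝ) / 5) * G t x y ^ 2 := e
      _ ≤ M ^ ((1 : ℝ) / 5) * G t x y ^ 2 := by
        gcongr
        exact abs_kernel_le ht x y
  have hint : IntegrableOn (fun y => G t x y ^ 2) (Icc (0 : ℝ) 1) := by
    refine Measure.integrableOn_of_bounded (M := M ^ 2) (by simp)
      ((measurable_kernel ht x).pow_const 2).aestronglyMeasurable (ae_of_all _ fun y => ?_)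
    rw [norm_pow, Real.norm_eq_abs]
    exact pow_le_pow_left₀ (abs_nonneg _) (abs_kernel_le ht x y) 2
  have hint' : IntegrableOn (fun y => G t x y ^ ((11 : ℝ) / 5)) (Icc (0 : ℝ) 1) :=
    (hint.const_mul (M ^ ((1 : ℝ) / 5))).mono'
      ((measurable_kernel ht x).pow_const _).aestronglyMeasurable (ae_of_all _ hpt)
  calc ∫ y in Icc (0 : ℝ) 1, G t x y ^ ((11 : ℝ) / 5)
      ≤ ∫ y in Icc (0 : ℝ) 1, M ^ ((1 : ℝ) / 5) * G t x y ^ 2 :=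
        integral_mono hint' (hint.const_mul _) fun y => (le_abs_self _).trans (hpt y)
    _ = M ^ ((1 : ℝ) / 5) * ∫ y in Icc (0 : ℝ) 1, G t x y ^ 2 := integral_const_mul _ _
    _ ≤ M ^ ((1 : ℝ) / 5) * M := by
        gcongr
        exact integral_kernel_sq_le ht x
    _ = 1 * t ^ (-(3 : ℝ) / 5) := by
        rw [hM, ← Real.rpow_mul ht.le, ← Real.rpow_add ht]
        norm_num
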